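/- arXiv:1811.09537 — 2 statements merged into one kernel-verified Lean document; each statement's English description precedes it below -/
import Mathlib

section
/- Let G be a finite identifiable block graph (i.e., a block graph with no true twins). Then the identifying code number of G satisfies γ^ID(G) ≤ n_Q(G), where n_Q(G) is the number of maximal cliques of G. -/
open SimpleGraph

variable {V : Type*}

/-- The closed neighborhood `N[u]` of a vertex `u`. -/
def closedNbhd (G : SimpleGraph V) (u : V) : Set V := insert u (G.neighborSet u)

/-- `G` is identifiable: no two distinct vertices are true twins
(i.e. have the same closed neighborhood). -/
def Identifiable (G : SimpleGraph V) : Prop :=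
  ∀ u v : V, u ≠ v → closedNbhd G u ≠ closedNbhd G v

/-- `G` has no false twins: no two distinct vertices have the same open neighborhood. -/
def HasNoFalseTwins (G : SimpleGraph V) : Prop :=
  ∀ u v : V, u ≠ v → G.neighborSet u ≠ G.neighborSet v

/-- `C` is an identifying code of `G`. -/
def IsIdCode (G : SimpleGraph V) (C : Set V) : Prop :=
  (∀ u : V, (closedNbhd G u ∩ C).Nonempty) ∧
  ∀ u v : V, u ≠ v → closedNbhd G u ∩ C ≠ closedNbhd G v ∩ C

/-- `C` is a locating-dominating code of `G`. -/
def IsLDCode (G : SimpleGraph V) (C : Set V) : Prop :=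
  (∀ u : V, (closedNbhd G u ∩ C).Nonempty) ∧
  ∀ u v : V, u ∉ C → v ∉ C → u ≠ v → G.neighborSet u ∩ C ≠ G.neighborSet v ∩ C

/-- `C` is an open locating-dominating code of `G`. -/
def IsOLDCode (G : SimpleGraph V) (C : Set V) : Prop :=
  (∀ u : V, (G.neighborSet u ∩ C).Nonempty) ∧
  ∀ u v : V, u ≠ v → G.neighborSet u ∩ C ≠ G.neighborSet v ∩ C

/-- The identifying code number `γ^ID(G)`. -/
noncomputable def gammaID (G : SimpleGraph V) : ℕ :=
  sInf {n : ℕ | ∃ C : Set V, IsIdCode G C ∧ C.ncard = n}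

/-- The locating-dominating number `γ^LD(G)`. -/
noncomputable def gammaLD (G : SimpleGraph V) : ℕ :=
  sInf {n : ℕ | ∃ C : Set V, IsLDCode G C ∧ C.ncard = n}

/-- The open locating-dominating number `γ^OLD(G)`. -/
noncomputable def gammaOLD (G : SimpleGraph V) : ℕ :=
  sInf {n : ℕ | ∃ C : Set V, IsOLDCode G C ∧ C.ncard = n}

/-- `G` contains an induced cycle of length `n`. -/
def HasInducedCycle (G : SimpleGraph V) (n : ℕ) : Prop :=
  ∃ f : ZMod n → V, Function.Injective f ∧
    ∀ i j : ZMod n, G.Adj (f i) (f j) ↔ (j = i + 1 ∨ i = j + 1)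

/-- `G` contains an induced diamond (`K₄` minus an edge). -/
def HasInducedDiamond (G : SimpleGraph V) : Prop :=
  ∃ a b c d : V, a ≠ b ∧ a ≠ c ∧ a ≠ d ∧ b ≠ c ∧ b ≠ d ∧ c ≠ d ∧
    G.Adj a b ∧ G.Adj a c ∧ G.Adj b c ∧ G.Adj a d ∧ G.Adj b d ∧ ¬ G.Adj c d

/-- A block graph is a chordal (no induced cycle of length at least 4),
diamond-free graph. -/
def IsBlockGraph (G : SimpleGraph V) : Prop :=
  (∀ n : ℕ, 4 ≤ n → ¬ HasInducedCycle G n) ∧ ¬ HasInducedDiamond G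

/-- `n_Q(G)`: the number of maximal cliques of `G`. -/
noncomputable def nQ (G : SimpleGraph V) : ℕ :=
  {s : Set V | G.IsClique s ∧ ∀ t : Set V, G.IsClique t → s ⊆ t → s = t}.ncard

theorem bg_idCode_iff (G : SimpleGraph V) (C : Set V) : IsIdCode G C ↔
    (∀ u, ∃ c ∈ C, (c = u ∨ G.Adj u c)) ∧
    ∀ u v, u ≠ v → ∃ c ∈ C, ¬ ((c = u ∨ G.Adj u c) ↔ (c = v ∨ G.Adj v c)) := by
  unfold IsIdCode closedNbhd
  refine and_congr (forall_congr' fun u => ?_)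
    (forall_congr' fun u => forall_congr' fun v => imp_congr_right fun _ => ?_)
  · simp only [Set.Nonempty, Set.mem_inter_iff, Set.mem_insert_iff, SimpleGraph.mem_neighborSet]
    exact exists_congr fun c => and_comm
  · rw [Ne, Set.ext_iff, not_forall]
    refine exists_congr fun c => ?_
    simp only [Set.mem_inter_iff, Set.mem_insert_iff, SimpleGraph.mem_neighborSet]
    tauto

theorem bg_ident_iff (G : SimpleGraph V) : Identifiable G ↔
    ∀ u v, u ≠ v → ∃ c, ¬ ((c = u ∨ G.Adj u c) ↔ (c = v ∨ G.Adj v c)) := by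
  unfold Identifiable closedNbhd
  refine forall_congr' fun u => forall_congr' fun v => imp_congr_right fun _ => ?_
  rw [Ne, Set.ext_iff, not_forall]
  refine exists_congr fun c => ?_
  simp only [Set.mem_insert_iff, SimpleGraph.mem_neighborSet]

/-- `f 0, ..., f m` is an induced path. -/
def BgPath (G : SimpleGraph V) (f : ℕ → V) (m : ℕ) : Prop :=
  (∀ i j, i ≤ m → j ≤ m → f i = f j → i = j) ∧
  ∀ i j, i ≤ m → j ≤ m → (G.Adj (f i) (f j) ↔ (j = i + 1 ∨ i = j + 1))

/-- Prepend a vertex. -/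
def bgCons (u : V) (f : ℕ → V) : ℕ → V
  | 0 => u
  | n + 1 => f n

theorem bg_cycle (G : SimpleGraph V) (f : ℕ → V) (m i : ℕ) (hf : BgPath G f m) (u : V)
    (hi : 2 ≤ i) (him : i ≤ m) (hu : ∀ j ≤ m, u ≠ f j) (h0 : G.Adj u (f 0)) (h1 : G.Adj u (f i))
    (h2 : ∀ j, 0 < j → j < i → ¬ G.Adj u (f j)) : HasInducedCycle G (i + 2) := by
  obtain ⟨hinj, hadj⟩ := hf
  have key : ∀ k l : ZMod (i+2), l = k + 1 ↔
      ((k.val ≤ i ∧ l.val = k.val + 1) ∨ (k.val = i + 1 ∧ l.val = 0)) := by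
    intro k l
    have hk := ZMod.val_lt k
    have hl := ZMod.val_lt l
    rw [← (ZMod.val_injective (i+2)).eq_iff, ZMod.val_add, ZMod.val_one'' (by omega)]
    rcases Nat.lt_or_ge k.val (i+1) with h | h
    · rw [Nat.mod_eq_of_lt (by omega)]; omega
    · have : k.val + 1 = i + 2 := by omega
      rw [this, Nat.mod_self]; omega
  refine ⟨fun k => if k.val ≤ i then f k.val else u, ?_, ?_⟩
  · intro k l h
    apply ZMod.val_injective (i+2)
    have hk := ZMod.val_lt k
    have hl := ZMod.val_lt l
    simp only at h
    split_ifs at h with ha hb hb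
    · exact hinj _ _ (by omega) (by omega) h
    · exact absurd h.symm (hu _ (by omega))
    · exact absurd h (hu _ (by omega))
    · omega
  · intro k l
    have hk := ZMod.val_lt k
    have hl := ZMod.val_lt l
    have hU : ∀ j ≤ i, (G.Adj u (f j) ↔ j = 0 ∨ j = i) := by
      intro j hj
      constructor
      · intro h; by_contra hc; exact h2 j (by omega) (by omega) h
      · rintro (rfl | rfl) <;> assumption
    rw [key, key]
    simp only
    split_ifs with ha hb hb
    · rw [hadj _ _ (by omega) (by omega)]; omega
    · rw [G.adj_comm, hU _ ha]; omega
    · rw [hU _ hb]; omega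
    · simp only [SimpleGraph.irrefl, false_iff]; omega

theorem bg_extend (G : SimpleGraph V) (hB : IsBlockGraph G) (f : ℕ → V) (m : ℕ)
    (hf : BgPath G f m) (u : V) (h0 : G.Adj u (f 0))
    (h1 : 1 ≤ m → u ≠ f 1 ∧ ¬ G.Adj u (f 1)) : BgPath G (bgCons u f) (m + 1) := by
  have hne : ∀ j ≤ m, u ≠ f j := by
    rintro j hj rfl
    have := (hf.2 j 0 hj (by omega)).1 h0
    have hj1 : j = 1 := by omega
    subst hj1
    exact (h1 hj).1 rfl
  have hna : ∀ j, 0 < j → j ≤ m → ¬ G.Adj u (f j) := by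
    intro j
    induction j using Nat.strong_induction_on with
    | _ j ih =>
      intro hj hjm ha
      rcases Nat.lt_or_ge j 2 with h | h
      · have : j = 1 := by omega
        subst this
        exact (h1 hjm).2 ha
      · exact hB.1 (j+2) (by omega) (bg_cycle G f m j hf u h hjm hne h0 ha
          fun l hl hlj => ih l hlj hl (by omega))
  have hU : ∀ j ≤ m, (G.Adj u (f j) ↔ j = 0) := by
    intro j hj
    constructor
    · intro h; by_contra hc; exact hna j (by omega) hj h
    · rintro rfl; exact h0
  constructor
  · rintro (_ | i) (_ | j) hi hj h
    · rfl
    · exact absurd h (hne j (by omega))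
    · exact absurd h.symm (hne i (by omega))
    · rw [hf.1 i j (by omega) (by omega) h]
  · rintro (_ | i) (_ | j) hi hj
    · simp [bgCons]
    · simp only [bgCons]; rw [hU j (by omega)]; omega
    · simp only [bgCons]; rw [G.adj_comm, hU i (by omega)]; omega
    · simp only [bgCons]; rw [hf.2 i j (by omega) (by omega)]; omega

theorem bg_longer (G : SimpleGraph V) (hB : IsBlockGraph G) (hI : Identifiable G)
    (hp : ∀ a b, G.Adj a b → ∃ c, c ≠ b ∧ G.Adj a c) (f : ℕ → V) (m : ℕ)
    (hf : BgPath G f (m+1)) : ∃ g, BgPath G g (m+2) := by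
  have h01 : G.Adj (f 0) (f 1) := (hf.2 0 1 (by omega) (by omega)).2 (by omega)
  obtain ⟨w, hw1, hw0⟩ := hp _ _ h01
  by_cases hall : ∃ w, w ≠ f 1 ∧ G.Adj (f 0) w ∧ ¬ G.Adj w (f 1)
  · obtain ⟨w, a, b, c⟩ := hall
    exact ⟨_, bg_extend G hB f (m+1) hf w b.symm fun _ => ⟨a, c⟩⟩
  push Not at hall
  have hd : ∀ a b c d : V, c ≠ d → G.Adj a b → G.Adj a c → G.Adj b c → G.Adj a d → G.Adj b d →
      G.Adj c d := by
    intro a b c d hcd hab hac hbc had hbd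
    by_contra h
    exact hB.2 ⟨a, b, c, d, hab.ne, hac.ne, had.ne, hbc.ne, hbd.ne, hcd, hab, hac, hbc, had, hbd, h⟩
  have hw := hall w hw1 hw0
  obtain ⟨z, hz⟩ := (bg_ident_iff G).1 hI (f 0) w hw0.ne
  have hcl : ∀ c, (c = f 0 ∨ G.Adj (f 0) c) → (c = w ∨ G.Adj w c) := by
    rintro c (rfl | hc)
    · exact Or.inr hw0.symm
    · by_cases hcw : c = w
      · exact Or.inl hcw
      by_cases hc1 : c = f 1
      · subst hc1; exact Or.inr hw
      · exact Or.inr (hd (f 0) (f 1) w c (Ne.symm hcw) h01 hw0 hw.symm hc (hall c hc1 hc).symm)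
  have hz0 : z ≠ f 0 ∧ ¬ G.Adj (f 0) z := by
    constructor
    · intro h; exact hz ⟨hcl z, fun _ => Or.inl h⟩
    · intro h; exact hz ⟨hcl z, fun _ => Or.inr h⟩
  have hzw : G.Adj w z := by
    have h1 : z = w ∨ G.Adj w z := by
      by_contra h
      exact hz ⟨hcl z, fun h' => absurd h' h⟩
    rcases h1 with rfl | h1
    · exact absurd hw0 hz0.2
    · exact h1
  have htail : BgPath G (fun n => f (n+1)) m := by
    constructor
    · intro i j hi hj h
      have := hf.1 (i+1) (j+1) (by omega) (by omega) h
      omega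
    · intro i j hi hj
      simp only
      rw [hf.2 (i+1) (j+1) (by omega) (by omega)]; omega
  have h2 : BgPath G (bgCons w (fun n => f (n+1))) (m+1) := by
    apply bg_extend G hB _ m htail w hw
    intro hm
    have h02 := (hf.2 0 2 (by omega) (by omega))
    have h12 : G.Adj (f 1) (f 2) := (hf.2 1 2 (by omega) (by omega)).2 (by omega)
    have h02' : ¬ G.Adj (f 0) (f 2) := by rw [h02]; omega
    constructor
    · rintro rfl; exact h02' hw0
    · intro h
      apply h02'
      refine hd w (f 1) (f 0) (f 2) ?_ hw hw0.symm h01.symm h h12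
      intro h
      have := hf.1 0 2 (by omega) (by omega) h
      omega
  refine ⟨_, bg_extend G hB _ (m+1) h2 z hzw.symm fun _ => ?_⟩
  show z ≠ f 1 ∧ ¬ G.Adj z (f 1)
  constructor
  · rintro rfl; exact hz0.2 h01
  · intro h
    exact hz0.2 (hd w (f 1) (f 0) z (Ne.symm hz0.1) hw hw0.symm h01.symm hzw h.symm)

theorem bg_pendant [Fintype V] (G : SimpleGraph V) (hB : IsBlockGraph G) (hI : Identifiable G)
    (a b : V) (hab : G.Adj a b) : ∃ p x, ∀ w, G.Adj p w ↔ w = x := by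
  by_contra hcon
  push Not at hcon
  have hp : ∀ a b, G.Adj a b → ∃ c, c ≠ b ∧ G.Adj a c := by
    intro a b h
    by_contra hc
    push Not at hc
    obtain ⟨w, hw⟩ := hcon a b
    rcases hw with ⟨h1, h2⟩ | ⟨h1, h2⟩
    · exact hc w h2 h1
    · subst h2; exact h1 h
  have hlong : ∀ m, ∃ f, BgPath G f (m+1) := by
    intro m
    induction m with
    | zero =>
      refine ⟨bgCons a (fun _ => b), bg_extend G hB _ 0 ⟨by intros; omega, ?_⟩ a hab (by omega)⟩
      intro i j hi hj
      simp only [SimpleGraph.irrefl, false_iff]; omega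
    | succ m ih =>
      obtain ⟨f, hf⟩ := ih
      exact bg_longer G hB hI hp f m hf
  obtain ⟨f, hf⟩ := hlong (Fintype.card V)
  have : Function.Injective (fun i : Fin (Fintype.card V + 1) => f i) := by
    intro i j h
    exact Fin.ext (hf.1 i j (by omega) (by omega) h)
  have := Fintype.card_le_of_injective _ this
  simp at this

/-- Maximal cliques. -/
def BgMax (G : SimpleGraph V) (s : Set V) : Prop :=
  G.IsClique s ∧ ∀ t : Set V, G.IsClique t → s ⊆ t → s = t

theorem bg_exists_max [Fintype V] (G : SimpleGraph V) (s : Set V) (hs : G.IsClique s) :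
    ∃ t, s ⊆ t ∧ BgMax G t := by
  obtain ⟨t, hst, ht⟩ := (Set.toFinite {t : Set V | G.IsClique t}).exists_le_maximal hs
  exact ⟨t, hst, ht.1, fun r hr htr => Set.Subset.antisymm htr (ht.2 hr htr)⟩

theorem bg_nQ_lt [Fintype V] (G : SimpleGraph V) (S : Set V) (K : Set V) (hK : BgMax G K)
    (hKS : ¬ BgMax (G.induce S) (Subtype.val ⁻¹' K)) : nQ (G.induce S) < nQ G := by
  classical
  have hex : ∀ s : Set S, ∃ t : Set V, BgMax (G.induce S) s → (Subtype.val '' s ⊆ t ∧ BgMax G t) := by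
    intro s
    by_cases h : BgMax (G.induce S) s
    · obtain ⟨t, ht⟩ := bg_exists_max G (Subtype.val '' s) (by
        rintro _ ⟨a, ha, rfl⟩ _ ⟨b, hb, rfl⟩ hne
        exact h.1 ha hb (fun h => hne (congrArg _ h)))
      exact ⟨t, fun _ => ht⟩
    · exact ⟨∅, fun h' => absurd h' h⟩
  choose F hF using hex
  have hback : ∀ s, BgMax (G.induce S) s → s = Subtype.val ⁻¹' (F s) := by
    intro s hs
    apply hs.2
    · intro a ha b hb hne
      exact (hF s hs).2.1 ha hb (fun h => hne (Subtype.ext h))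
    · intro a ha
      exact (hF s hs).1 ⟨a, ha, rfl⟩
  have hinj : Set.InjOn F {s | BgMax (G.induce S) s} := by
    intro s hs t ht h
    rw [hback s hs, hback t ht, h]
  show {s | BgMax (G.induce S) s}.ncard < {s | BgMax G s}.ncard
  rw [← Set.ncard_image_of_injOn hinj]
  apply Set.ncard_lt_ncard _ (Set.toFinite _)
  refine ⟨?_, fun h => ?_⟩
  · rintro _ ⟨s, hs, rfl⟩
    exact (hF s hs).2
  · obtain ⟨s, hs, hsK⟩ := h hK
    apply hKS
    rw [← hsK, ← hback s hs]
    exact hs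

theorem bg_block_induce (G : SimpleGraph V) (S : Set V) (hB : IsBlockGraph G) :
    IsBlockGraph (G.induce S) := by
  constructor
  · rintro n hn ⟨f, hf, hf2⟩
    exact hB.1 n hn ⟨fun i => (f i).1, Subtype.val_injective.comp hf, fun i j => hf2 i j⟩
  · rintro ⟨a, b, c, d, h1, h2, h3, h4, h5, h6, h⟩
    refine hB.2 ⟨a, b, c, d, ?_, ?_, ?_, ?_, ?_, ?_, h⟩ <;>
      exact fun h => by first
        | exact h1 (Subtype.ext h) | exact h2 (Subtype.ext h) | exact h3 (Subtype.ext h)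
        | exact h4 (Subtype.ext h) | exact h5 (Subtype.ext h) | exact h6 (Subtype.ext h)

/-- Transfer of a code from an induced subgraph to the ambient graph, elementwise. -/
theorem bg_transfer [Fintype V] (G : SimpleGraph V) (S : Set V)
    (h : ∃ C, IsIdCode (G.induce S) C ∧ C.ncard ≤ nQ (G.induce S)) :
    ∃ D : Set V, D ⊆ S ∧ D.ncard ≤ nQ (G.induce S) ∧
      (∀ u ∈ S, ∃ c ∈ D, (c = u ∨ G.Adj u c)) ∧
      ∀ u ∈ S, ∀ v ∈ S, u ≠ v → ∃ c ∈ D, ¬ ((c = u ∨ G.Adj u c) ↔ (c = v ∨ G.Adj v c)) := by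
  obtain ⟨C, hC, hn⟩ := h
  rw [bg_idCode_iff] at hC
  refine ⟨Subtype.val '' C, by rintro _ ⟨a, _, rfl⟩; exact a.2, ?_, ?_, ?_⟩
  · rwa [Set.ncard_image_of_injective _ Subtype.val_injective]
  · intro u hu
    obtain ⟨c, hc, h⟩ := hC.1 ⟨u, hu⟩
    refine ⟨c, ⟨c, hc, rfl⟩, ?_⟩
    simpa [Subtype.ext_iff] using h
  · intro u hu v hv huv
    obtain ⟨c, hc, h⟩ := hC.2 ⟨u, hu⟩ ⟨v, hv⟩ (fun h => huv (congrArg Subtype.val h))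
    refine ⟨c, ⟨c, hc, rfl⟩, ?_⟩
    simpa only [Subtype.ext_iff, SimpleGraph.induce_adj] using h

set_option maxHeartbeats 1000000 in
theorem bg_main (n : ℕ) : ∀ {V : Type*} [Fintype V] (G : SimpleGraph V), Fintype.card V = n →
    IsBlockGraph G → Identifiable G → ∃ C, IsIdCode G C ∧ C.ncard ≤ nQ G := by
  induction n using Nat.strong_induction_on with
  | _ n ih =>
  intro V _ G hn hB hI
  classical
  have IH : ∀ S : Set V, (∃ p, p ∉ S) → Identifiable (G.induce S) → ∃ D : Set V, D ⊆ S ∧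
      D.ncard ≤ nQ (G.induce S) ∧
      (∀ u ∈ S, ∃ c ∈ D, (c = u ∨ G.Adj u c)) ∧
      ∀ u ∈ S, ∀ v ∈ S, u ≠ v → ∃ c ∈ D, ¬ ((c = u ∨ G.Adj u c) ↔ (c = v ∨ G.Adj v c)) := by
    rintro S ⟨p, hp⟩ hS
    exact bg_transfer G S (ih _ (by rw [← hn]; exact Fintype.card_subtype_lt hp) (G.induce S) rfl
      (bg_block_induce G S hB) hS)
  have hI' := (bg_ident_iff G).1 hI
  by_cases hE : ∃ a b, G.Adj a b
  swap
  · push Not at hE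
    refine ⟨Set.univ, (bg_idCode_iff _ _).2 ⟨fun u => ⟨u, trivial, Or.inl rfl⟩,
      fun u v huv => ⟨u, trivial, by simp [hE, huv]⟩⟩, ?_⟩
    rw [← Set.ncard_image_of_injective Set.univ (Set.singleton_injective (α := V))]
    apply Set.ncard_le_ncard _ (Set.toFinite _)
    rintro _ ⟨a, _, rfl⟩
    refine ⟨by simp, fun t ht hat => ?_⟩
    refine Set.Subset.antisymm hat fun b hb => ?_
    by_contra hne
    exact hE b a (ht hb (hat rfl) hne)
  obtain ⟨a, b, hab⟩ := hE
  obtain ⟨p, x, hp⟩ := bg_pendant G hB hI a b hab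
  have hpx : G.Adj p x := (hp x).2 rfl
  have hne : p ≠ x := hpx.ne
  have hy : ∃ y, y ≠ p ∧ G.Adj x y := by
    obtain ⟨c, hc⟩ := hI' p x hne
    rw [hp] at hc
    refine ⟨c, ?_, ?_⟩
    · rintro rfl
      exact hc ⟨fun _ => Or.inr hpx.symm, fun _ => Or.inl rfl⟩
    · by_contra h
      by_cases hcp : c = p
      · subst hcp; exact h hpx.symm
      · exact hc (by simp [hcp, h])
  obtain ⟨y, hyp, hxy⟩ := hy
  have hK : BgMax G {p, x} := by
    constructor
    · intro u hu v hv huv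
      rcases hu with rfl | rfl <;> rcases hv with rfl | rfl
      · exact absurd rfl huv
      · exact hpx
      · exact hpx.symm
      · exact absurd rfl huv
    · intro t ht hst
      refine Set.Subset.antisymm hst fun c hc => ?_
      by_cases hcp : c = p
      · exact Or.inl hcp
      · exact Or.inr ((hp c).1 (ht (hst (Or.inl rfl)) hc (Ne.symm hcp)))
  by_cases hS : Identifiable (G.induce {p}ᶜ)
  · have hlt : nQ (G.induce {p}ᶜ) < nQ G := by
      apply bg_nQ_lt G _ _ hK
      intro hmax
      have := hmax.2 {⟨x, hne.symm⟩, ⟨y, hyp⟩} (by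
        intro u hu v hv huv
        rcases hu with rfl | rfl <;> rcases hv with rfl | rfl
        · exact absurd rfl huv
        · exact hxy
        · exact hxy.symm
        · exact absurd rfl huv) (by
        rintro ⟨u, hu⟩ (h | h)
        · exact absurd h hu
        · left; exact Subtype.ext h)
      have h2 : (⟨y, hyp⟩ : ({p}ᶜ : Set V)) ∈ (Subtype.val ⁻¹' ({p, x} : Set V)) := by
        rw [this]; right; rfl
      rcases h2 with h | h
      · exact hyp h
      · exact hxy.ne (Eq.symm h)
    obtain ⟨D, hDS, hDn, hdom, hsep⟩ := IH {p}ᶜ ⟨p, by simp⟩ hS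
    have hpD : p ∉ D := fun h => hDS h rfl
    have hdom' : ∀ u, u ≠ p → ∃ c ∈ D, (c = u ∨ G.Adj u c) := hdom
    have hsep' : ∀ u v, u ≠ p → v ≠ p → u ≠ v → ∃ c ∈ D,
      ¬ ((c = u ∨ G.Adj u c) ↔ (c = v ∨ G.Adj v c)) := fun u v hu hv => hsep u hu v hv
    have hpu : ∀ u, u ≠ x → ¬ G.Adj u p := fun u hu h => hu ((hp u).1 h.symm)
    by_cases hc : ∃ c ∈ D, c ≠ x ∧ G.Adj x c
    · obtain ⟨c, hcD, hcx, hxc⟩ := hc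
      have hcp : c ≠ p := fun h => hpD (h ▸ hcD)
      have hsp : ∀ v, v ≠ p → ∃ c ∈ insert p D,
          ¬ ((c = p ∨ G.Adj p c) ↔ (c = v ∨ G.Adj v c)) := by
        intro v hv
        by_cases hvx : v = x
        · subst hvx
          exact ⟨c, Or.inr hcD, by simp [hp, hcx, hcp, hxc]⟩
        · exact ⟨p, Or.inl rfl, by simp [hpu v hvx, hv.symm]⟩
      refine ⟨insert p D, (bg_idCode_iff _ _).2 ⟨fun u => ?_, fun u v huv => ?_⟩,
        (Set.ncard_insert_le _ _).trans (by omega)⟩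
      · by_cases hu : u = p
        · exact ⟨p, Or.inl rfl, Or.inl hu.symm⟩
        · obtain ⟨c, h1, h2⟩ := hdom' u hu
          exact ⟨c, Or.inr h1, h2⟩
      · by_cases hu : u = p
        · subst hu; exact hsp v huv.symm
        · by_cases hv : v = p
          · subst hv
            obtain ⟨c, h1, h2⟩ := hsp u huv
            exact ⟨c, h1, fun h => h2 h.symm⟩
          · obtain ⟨c, h1, h2⟩ := hsep' u v hu hv huv
            exact ⟨c, Or.inr h1, h2⟩
    · push Not at hc
      have hxD : x ∈ D := by
        obtain ⟨c, h1, h2⟩ := hdom' x hne.symm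
        by_cases h : c = x
        · exact h ▸ h1
        · exact absurd (h2.resolve_left h) (hc c h1 h)
      have hsp : ∀ v, v ≠ p → ∃ c ∈ insert y D,
          ¬ ((c = p ∨ G.Adj p c) ↔ (c = v ∨ G.Adj v c)) := by
        intro v hv
        by_cases hvx : v = x
        · subst hvx
          exact ⟨y, Or.inl rfl, by simp [hp, hyp, hxy.ne.symm, hxy]⟩
        · obtain ⟨c, hcD, h⟩ := hsep' x v hne.symm hv (Ne.symm hvx)
          refine ⟨c, Or.inr hcD, ?_⟩
          have hcp : c ≠ p := fun h => hpD (h ▸ hcD)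
          have := hc c hcD
          rw [hp]
          grind
      refine ⟨insert y D, (bg_idCode_iff _ _).2 ⟨fun u => ?_, fun u v huv => ?_⟩,
        (Set.ncard_insert_le _ _).trans (by omega)⟩
      · by_cases hu : u = p
        · exact ⟨x, Or.inr hxD, Or.inr (hu ▸ hpx)⟩
        · obtain ⟨c, h1, h2⟩ := hdom' u hu
          exact ⟨c, Or.inr h1, h2⟩
      · by_cases hu : u = p
        · subst hu; exact hsp v huv.symm
        · by_cases hv : v = p
          · subst hv
            obtain ⟨c, h1, h2⟩ := hsp u huv
            exact ⟨c, h1, fun h => h2 h.symm⟩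
          · obtain ⟨c, h1, h2⟩ := hsep' u v hu hv huv
            exact ⟨c, Or.inr h1, h2⟩
  · -- `x` has a twin in `G - p`
    have htw : ∃ z, z ≠ p ∧ z ≠ x ∧ ∀ c, c ≠ p →
        ((c = x ∨ G.Adj x c) ↔ (c = z ∨ G.Adj z c)) := by
      rw [bg_ident_iff] at hS
      simp only [not_forall, not_exists, not_not] at hS
      obtain ⟨⟨u, hu⟩, ⟨v, hv⟩, huv, h⟩ := hS
      have huv' : u ≠ v := fun h => huv (Subtype.ext h)
      have hup : u ≠ p := hu
      have hvp : v ≠ p := hv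
      have h' : ∀ c, c ≠ p → ((c = u ∨ G.Adj u c) ↔ (c = v ∨ G.Adj v c)) := by
        intro c hc
        have := h ⟨c, hc⟩
        simpa only [Subtype.ext_iff, SimpleGraph.induce_adj] using this
      obtain ⟨c, hc⟩ := hI' u v huv'
      have hcp : c = p := by by_contra hcp; exact hc (h' c hcp)
      subst hcp
      rw [G.adj_comm u, G.adj_comm v, hp, hp] at hc
      by_cases hux : u = x
      · subst hux; exact ⟨v, hvp, huv'.symm, h'⟩
      · by_cases hvx : v = x
        · subst hvx; exact ⟨u, hup, huv', fun c hc => (h' c hc).symm⟩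
        · exact absurd (by simp [hup.symm, hvp.symm, hux, hvx]) hc
    obtain ⟨z, hzp, hzx, hz⟩ := htw
    have hxz : G.Adj x z := ((hz z hzp).2 (Or.inl rfl)).resolve_left hzx
    have hmemS : ∀ u, u ∈ ({p, x}ᶜ : Set V) ↔ u ≠ p ∧ u ≠ x := by intro u; simp
    have hS2 : Identifiable (G.induce ({p, x}ᶜ : Set V)) := by
      rw [bg_ident_iff]
      rintro ⟨u, hu⟩ ⟨v, hv⟩ huv
      have huv' : u ≠ v := fun h => huv (Subtype.ext h)
      have hu' := (hmemS u).1 hu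
      have hv' := (hmemS v).1 hv
      by_contra hcon
      simp only [not_exists, not_not] at hcon
      have h' : ∀ c, c ≠ p → c ≠ x → ((c = u ∨ G.Adj u c) ↔ (c = v ∨ G.Adj v c)) := by
        intro c hc hcx
        have := hcon ⟨c, (hmemS c).2 ⟨hc, hcx⟩⟩
        simpa only [Subtype.ext_iff, SimpleGraph.induce_adj] using this
      obtain ⟨c, hc⟩ := hI' u v huv'
      by_cases hcp : c = p
      · subst hcp
        rw [G.adj_comm u, G.adj_comm v, hp, hp] at hc
        exact hc (by simp [hu'.1.symm, hv'.1.symm, hu'.2, hv'.2])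
      · by_cases hcx : c = x
        · subst hcx
          have h1 := h' z hzp hzx
          have h2 := hz u hu'.1
          have h3 := hz v hv'.1
          rw [G.adj_comm u, G.adj_comm v] at hc
          rw [G.adj_comm u, G.adj_comm v] at h1
          grind
        · exact hc (h' c hcp hcx)
    have hlt : nQ (G.induce ({p, x}ᶜ : Set V)) < nQ G := by
      apply bg_nQ_lt G _ _ hK
      intro hmax
      have := hmax.2 {⟨z, (hmemS z).2 ⟨hzp, hzx⟩⟩} (by simp) (by
        rintro ⟨u, hu⟩ h
        exact absurd h hu)
      have h2 : (⟨z, (hmemS z).2 ⟨hzp, hzx⟩⟩ : ({p, x}ᶜ : Set V)) ∈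
          (Subtype.val ⁻¹' ({p, x} : Set V)) := by
        rw [this]; rfl
      exact (hmemS z).2 ⟨hzp, hzx⟩ h2
    obtain ⟨D, hDS, hDn, hdom, hsep⟩ := IH ({p, x}ᶜ : Set V) ⟨p, by simp⟩ hS2
    have hDne : ∀ c ∈ D, c ≠ p ∧ c ≠ x := fun c hc => (hmemS c).1 (hDS hc)
    have hpu : ∀ u, u ≠ x → ¬ G.Adj u p := fun u hu h => hu ((hp u).1 h.symm)
    obtain ⟨d, hdD, hd⟩ := hdom z ((hmemS z).2 ⟨hzp, hzx⟩)
    have hdx : G.Adj x d := ((hz d (hDne d hdD).1).2 hd).resolve_left (hDne d hdD).2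
    have key : ∀ u v, u ≠ v → (u = p ∨ (u = x ∧ v ≠ p) ∨
        (u ≠ p ∧ u ≠ x ∧ v ≠ p ∧ v ≠ x)) → ∃ c ∈ insert p D,
        ¬ ((c = u ∨ G.Adj u c) ↔ (c = v ∨ G.Adj v c)) := by
      rintro u v huv (rfl | ⟨rfl, hv⟩ | ⟨h1, h2, h3, h4⟩)
      · by_cases hvx : v = x
        · subst hvx
          exact ⟨d, Or.inr hdD, by simp [hp, hDne d hdD, hdx]⟩
        · exact ⟨u, Or.inl rfl, by simp [hpu v hvx, huv]⟩
      · exact ⟨p, Or.inl rfl, by simp [hpu v huv.symm, hv.symm, hpx.symm]⟩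
      · obtain ⟨c, hc, h⟩ := hsep u ((hmemS u).2 ⟨h1, h2⟩) v ((hmemS v).2 ⟨h3, h4⟩) huv
        exact ⟨c, Or.inr hc, h⟩
    refine ⟨insert p D, (bg_idCode_iff _ _).2 ⟨fun u => ?_, fun u v huv => ?_⟩,
      (Set.ncard_insert_le _ _).trans (by omega)⟩
    · by_cases hu : u = p
      · exact ⟨p, Or.inl rfl, Or.inl hu.symm⟩
      · by_cases hux : u = x
        · exact ⟨p, Or.inl rfl, Or.inr (hux ▸ hpx.symm)⟩
        · obtain ⟨c, h1, h2⟩ := hdom u ((hmemS u).2 ⟨hu, hux⟩)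
          exact ⟨c, Or.inr h1, h2⟩
    · by_cases h : (u = p ∨ (u = x ∧ v ≠ p) ∨ (u ≠ p ∧ u ≠ x ∧ v ≠ p ∧ v ≠ x))
      · exact key u v huv h
      · obtain ⟨c, h1, h2⟩ := key v u huv.symm (by
          clear * - h huv; grind)
        exact ⟨c, h1, fun h => h2 h.symm⟩

/-- For every finite identifiable block graph `G`, `γ^ID(G) ≤ n_Q(G)`. -/
theorem id_code_le_nQ {V : Type*} [Fintype V] (G : SimpleGraph V)
    (hB : IsBlockGraph G) (hI : Identifiable G) :
    gammaID G ≤ nQ G := by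
  obtain ⟨C, hC, hn⟩ := bg_main _ G rfl hB hI
  have h : gammaID G ≤ C.ncard := Nat.sInf_le ⟨C, hC, rfl⟩
  exact h.trans hn
end

section
/- Let G be a finite graph with no isolated vertices and no false twins (so that G admits an open locating-dominating code). Then γ^OLD(G) ≤ 2·γ^LD(G). -/
open SimpleGraph

variable {V : Type*}

/-- A family of sets that is pairwise distinct can be separated by adding at most
`m` points to `D` if the traces on `D` already form at least `card α - m` classes. -/
theorem exists_separating {α W : Type*} [Finite α] [Finite W] (N : α → Set W)
    (hN : Function.Injective N) (m : ℕ) : ∀ D : Set W,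
    Nat.card α ≤ (Set.range (fun x => N x ∩ D)).ncard + m →
    ∃ D' : Set W, D'.ncard ≤ D.ncard + m ∧ Function.Injective (fun x => N x ∩ D') := by
  induction m with
  | zero =>
    intro D h
    refine ⟨D, le_rfl, ?_⟩
    rw [← Set.injOn_univ]
    apply Set.injOn_of_ncard_image_eq _ (Set.toFinite _)
    apply le_antisymm (Set.ncard_image_le (Set.toFinite _))
    rw [Set.ncard_univ, Set.image_univ]
    simpa using h
  | succ m ih =>
    intro D h
    by_cases hinj : Function.Injective (fun x => N x ∩ D)
    · exact ⟨D, by omega, hinj⟩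
    · simp only [Function.Injective, not_forall] at hinj
      obtain ⟨x, y, hxy, hne⟩ := hinj
      have hNe : N x ≠ N y := fun e => hne (hN e)
      obtain ⟨w, hw⟩ : ∃ w, ¬ (w ∈ N x ↔ w ∈ N y) := by
        by_contra hc
        push Not at hc
        exact hNe (Set.ext hc)
      have hle : (Set.range (fun x => N x ∩ D)).ncard + 1 ≤
          (Set.range (fun x => N x ∩ insert w D)).ncard := by
        have him : (fun S : Set W => S ∩ D) '' (Set.range (fun x => N x ∩ insert w D)) =
            Set.range (fun x => N x ∩ D) := by
          rw [← Set.range_comp]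
          congr 1
          funext z
          ext v
          simp only [Function.comp, Set.mem_inter_iff, Set.mem_insert_iff]
          tauto
        rw [← him]
        apply Nat.succ_le_of_lt
        apply lt_of_le_of_ne (Set.ncard_image_le (Set.toFinite _))
        intro e
        have hio := Set.injOn_of_ncard_image_eq e (Set.toFinite _)
        have h1 : N x ∩ insert w D = N y ∩ insert w D := by
          apply hio ⟨x, rfl⟩ ⟨y, rfl⟩
          have e1 : ∀ z, N z ∩ insert w D ∩ D = N z ∩ D := by
            intro z
            ext v
            simp only [Set.mem_inter_iff, Set.mem_insert_iff]
            tauto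
          simp only [e1]
          exact hxy
        have h2 := Set.ext_iff.mp h1 w
        simp only [Set.mem_inter_iff, Set.mem_insert_iff, true_or, and_true] at h2
        exact hw h2
      obtain ⟨D', hD', hi⟩ := ih (insert w D) (by omega)
      have := Set.ncard_insert_le w D
      exact ⟨D', by omega, hi⟩

/-- For every finite graph `G` with no isolated vertices and no false
twins, `γ^OLD(G) ≤ 2 γ^LD(G)`. -/
theorem old_le_two_ld {V : Type*} [Fintype V] (G : SimpleGraph V)
    (hiso : ∀ v : V, (G.neighborSet v).Nonempty) (hft : HasNoFalseTwins G) :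
    gammaOLD G ≤ 2 * gammaLD G := by
  classical
  obtain ⟨C, hC, hcard⟩ : ∃ C : Set V, IsLDCode G C ∧ C.ncard = gammaLD G := by
    apply Nat.sInf_mem (s := {n : ℕ | ∃ C : Set V, IsLDCode G C ∧ C.ncard = n})
    refine ⟨_, Set.univ, ⟨fun u => ⟨u, Or.inl rfl, trivial⟩, ?_⟩, rfl⟩
    intro u v hu
    exact absurd trivial hu
  let N : Option V → Set V := fun o => o.elim ∅ (fun u => G.neighborSet u)
  have hN : Function.Injective N := by
    rintro (_ | u) (_ | v) h
    · rfl
    · exact absurd h.symm (hiso v).ne_empty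
    · exact absurd h (hiso u).ne_empty
    · by_contra hne
      exact hft u v (fun e => hne (by rw [e])) h
  have hdom : ∀ u, u ∉ C → (G.neighborSet u ∩ C).Nonempty := by
    intro u hu
    obtain ⟨w, hw, hwC⟩ := hC.1 u
    rcases hw with rfl | hw
    · exact absurd hwC hu
    · exact ⟨w, hw, hwC⟩
  have hS : Set.InjOn (fun x => N x ∩ C) (some '' C)ᶜ := by
    have hm : ∀ u, some u ∈ (some '' C)ᶜ → u ∉ C := fun u h hu => h ⟨u, hu, rfl⟩
    rintro (_ | u) hu (_ | v) hv h
    · rfl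
    · refine absurd ?_ (hdom v (hm v hv)).ne_empty
      simpa [N] using h.symm
    · refine absurd ?_ (hdom u (hm u hu)).ne_empty
      simpa [N] using h
    · by_contra hne
      exact hC.2 u v (hm u hu) (hm v hv) (fun e => hne (by rw [e])) h
  have hc : Nat.card (Option V) ≤ (Set.range (fun x => N x ∩ C)).ncard + C.ncard := by
    have h1 := Set.ncard_add_ncard_compl (some '' C)
    have h2 := hS.ncard_image
    have h3 := Set.ncard_le_ncard
      (Set.image_subset_range (fun x => N x ∩ C) (some '' C)ᶜ) (Set.toFinite _)
    have h4 := Set.ncard_image_le (f := some) (Set.toFinite C)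
    omega
  obtain ⟨D, hD, hinj⟩ := exists_separating N hN C.ncard C hc
  have hOLD : IsOLDCode G D := by
    constructor
    · intro u
      rw [Set.nonempty_iff_ne_empty]
      intro h
      have : some u = none := hinj (by simpa [N] using h)
      cases this
    · intro u v hne h
      have : some u = some v := hinj h
      exact hne (Option.some.inj this)
  have : gammaOLD G ≤ D.ncard := Nat.sInf_le ⟨D, hOLD, rfl⟩
  omega
end
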